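/- The binomial theorem for rising factorials with weights (generalized Chu–Vandermonde): for positive reals α, β, w, z and a natural number n, ∑_{k=0}^n C(n,k) (α)_k w^k (β)_{n-k} z^{n-k} = z^n (α+β)_n · ∑_{k=0}^n (-n)_k (α)_k (1 - w/z)^k / (k! (α+β)_k). -/

import Mathlib

theorem wcv_left (k : ℕ) (x : ℝ) :
    (ascPochhammer ℝ (k + 1)).eval x = x * (ascPochhammer ℝ k).eval (x + 1) := by
  rw [ascPochhammer_succ_left]
  simp [Polynomial.eval_comp]

theorem wcv_core (n : ℕ) (x : ℝ) : ∀ α β : ℝ,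
    ∑ k ∈ Finset.range (n + 1), (n.choose k : ℝ) *
      ((ascPochhammer ℝ k).eval α * x ^ k * (ascPochhammer ℝ (n - k)).eval β) =
    ∑ k ∈ Finset.range (n + 1), (n.choose k : ℝ) *
      ((ascPochhammer ℝ k).eval α * (x - 1) ^ k *
        (ascPochhammer ℝ (n - k)).eval (α + β + k)) := by
  induction n with
  | zero => intro α β; simp
  | succ n ih =>
    intro α β
    rw [Finset.sum_choose_succ_mul
        (fun i j => (ascPochhammer ℝ i).eval α * x ^ i * (ascPochhammer ℝ j).eval β),
      Finset.sum_choose_succ_mul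
        (fun i j => (ascPochhammer ℝ i).eval α * (x - 1) ^ i *
          (ascPochhammer ℝ j).eval (α + β + i))]
    have h1 := ih (α + 1) β
    have h2 := ih α (β + 1)
    have e1 : ∑ k ∈ Finset.range (n + 1), (n.choose k : ℝ) *
        ((ascPochhammer ℝ k).eval α * x ^ k * (ascPochhammer ℝ (n + 1 - k)).eval β) =
        β * ∑ k ∈ Finset.range (n + 1), (n.choose k : ℝ) *
        ((ascPochhammer ℝ k).eval α * x ^ k * (ascPochhammer ℝ (n - k)).eval (β + 1)) := by
      rw [Finset.mul_sum]
      refine Finset.sum_congr rfl fun k hk => ?_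
      have hk' : k ≤ n := by simpa [Nat.lt_succ_iff] using hk
      rw [Nat.succ_sub hk', Nat.succ_eq_add_one, wcv_left]; ring
    have e2 : ∑ k ∈ Finset.range (n + 1), (n.choose k : ℝ) *
        ((ascPochhammer ℝ (k + 1)).eval α * x ^ (k + 1) * (ascPochhammer ℝ (n - k)).eval β) =
        α * x * ∑ k ∈ Finset.range (n + 1), (n.choose k : ℝ) *
        ((ascPochhammer ℝ k).eval (α + 1) * x ^ k * (ascPochhammer ℝ (n - k)).eval β) := by
      rw [Finset.mul_sum]
      refine Finset.sum_congr rfl fun k hk => ?_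
      rw [wcv_left]; ring
    rw [e1, e2, h1, h2, Finset.mul_sum, Finset.mul_sum, ← Finset.sum_add_distrib,
      ← Finset.sum_add_distrib]
    refine Finset.sum_congr rfl fun k hk => ?_
    have hk' : k ≤ n := by simpa [Nat.lt_succ_iff] using hk
    have h3 : α * (ascPochhammer ℝ k).eval (α + 1) = (ascPochhammer ℝ k).eval α * (α + k) := by
      rw [← wcv_left, ascPochhammer_succ_eval]
    rw [Nat.succ_sub hk', Nat.succ_eq_add_one, wcv_left (n - k), wcv_left k]
    have a1 : α + β + ((k + 1 : ℕ) : ℝ) = α + β + k + 1 := by push_cast; ring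
    have a2 : α + 1 + β + (k : ℝ) = α + β + k + 1 := by ring
    have a3 : α + (β + 1) + (k : ℝ) = α + β + k + 1 := by ring
    rw [a1, a2, a3]
    generalize (ascPochhammer ℝ (n - k)).eval (α + β + k + 1) = A
    linear_combination ((n.choose k : ℝ) * (x - 1) ^ k * A) * h3

theorem wcv_split (n k : ℕ) (h : k ≤ n) (x : ℝ) :
    (ascPochhammer ℝ n).eval x =
      (ascPochhammer ℝ k).eval x * (ascPochhammer ℝ (n - k)).eval (x + k) := by
  have := congrArg (Polynomial.eval x) (ascPochhammer_mul ℝ k (n - k))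
  rw [Nat.add_sub_cancel' h] at this
  rw [← this]
  simp [Polynomial.eval_comp]

theorem wcv_neg (n k : ℕ) :
    (ascPochhammer ℝ k).eval (-(n : ℝ)) = (-1) ^ k * ((n.choose k : ℝ) * (k.factorial : ℝ)) := by
  rw [ascPochhammer_eval_neg_eq_descPochhammer, descPochhammer_eval_eq_descFactorial,
    Nat.descFactorial_eq_factorial_mul_choose]
  push_cast; ring

theorem weighted_chu_vandermonde (n : ℕ) (α β w z : ℝ)
    (hα : 0 < α) (hβ : 0 < β) (hw : 0 < w) (hz : 0 < z) :
    ∑ k ∈ Finset.range (n + 1),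
        (n.choose k : ℝ) * (ascPochhammer ℝ k).eval α * w ^ k *
          (ascPochhammer ℝ (n - k)).eval β * z ^ (n - k) =
      z ^ n * (ascPochhammer ℝ n).eval (α + β) *
        ∑ k ∈ Finset.range (n + 1),
          (ascPochhammer ℝ k).eval (-(n : ℝ)) * (ascPochhammer ℝ k).eval α *
            (1 - w / z) ^ k /
            ((Nat.factorial k) * (ascPochhammer ℝ k).eval (α + β)) := by
  have h := congrArg (fun t => z ^ n * t) (wcv_core n (w / z) α β)
  simp only [Finset.mul_sum] at h
  rw [Finset.mul_sum]
  refine Eq.trans ?_ (h.trans ?_)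
  · refine Finset.sum_congr rfl fun k hk => ?_
    have hk' : k ≤ n := by simpa [Nat.lt_succ_iff] using hk
    have hzn : z ^ n = z ^ k * z ^ (n - k) := by rw [← pow_add, Nat.add_sub_cancel' hk']
    rw [hzn, div_pow]
    field_simp
  · refine Finset.sum_congr rfl fun k hk => ?_
    have hk' : k ≤ n := by simpa [Nat.lt_succ_iff] using hk
    have hp := (ascPochhammer_pos k (α + β) (by positivity)).ne'
    have hf : (k.factorial : ℝ) ≠ 0 := by positivity
    have hs : (w / z - 1) ^ k = (-1) ^ k * (1 - w / z) ^ k := by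
      rw [← mul_pow]; ring
    rw [wcv_split n k hk', wcv_neg, hs]
    generalize (1 - w / z) ^ k = B
    field_simp
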